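/- Let f : X → Y be a continuous map between locally finite topological spaces, let α : π₀(X) → ℚ be a function with finite support, and let y ∈ Y. Then the sum ∑_{z ∈ π₀(F_y(f))} α([i(z̃)])·μ(F_y(f), z̃) (over the path components z of the homotopy fiber F_y(f), with z̃ any representative point of z) has only finitely many nonzero terms, its value is independent of the choice of representatives, and it equals ∑_{c ∈ π₀(X), π₀(f)(c) = [y]} α(c)·μ(X, x_c)·μ(Y, y)^{-1}, where x_c is any representative point of the component c. -/

import Mathlib

open scoped unitInterval

/-- The homotopy fiber of `f : X → Y` at `y : Y`: pairs `(x, p)` with `p` a path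
from `f x` to `y`, topologized as a subspace of `X × C(I, Y)`. -/
abbrev HomotopyFiber {X Y : Type*} [TopologicalSpace X] [TopologicalSpace Y]
    (f : X → Y) (y : Y) : Type _ :=
  {p : X × C(I, Y) // p.2 0 = f p.1 ∧ p.2 1 = y}

/-- The projection `i : F_y(f) → X`, `(x, p) ↦ x`. -/
def fiberIncl {X Y : Type*} [TopologicalSpace X] [TopologicalSpace Y]
    (f : X → Y) (y : Y) : HomotopyFiber f y → X :=
  fun p => p.1.1

/-- A space is locally finite if all its homotopy groups `π_n`, `n ≥ 1`, at all base
points are finite, and at each base point all but finitely many of them are trivial. -/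
def IsLocallyFinite (X : Type*) [TopologicalSpace X] : Prop :=
  ∀ x : X, (∀ n : ℕ, 1 ≤ n → Finite (HomotopyGroup (Fin n) X x)) ∧
    ∃ N : ℕ, ∀ n : ℕ, N < n → Subsingleton (HomotopyGroup (Fin n) X x)

/-- `μ(X, x) = ∏_{n ≥ 1} |π_n(X, x)|^{(-1)^n}`. -/
noncomputable def mu (X : Type*) [TopologicalSpace X] (x : X) : ℚ :=
  ∏ᶠ n : ℕ, (Nat.card (HomotopyGroup (Fin (n + 1)) X x) : ℚ) ^ ((-1 : ℤ) ^ (n + 1))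

/-- The path component of a point, as an element of `π₀(X)`. -/
def toPi0 {X : Type*} [TopologicalSpace X] (x : X) : ZerothHomotopy X :=
  Quotient.mk (pathSetoid X) x

/-- The map `π₀(f) : π₀(X) → π₀(Y)` induced by a continuous map. -/
def pi0Map {X Y : Type*} [TopologicalSpace X] [TopologicalSpace Y] {f : X → Y}
    (hf : Continuous f) : ZerothHomotopy X → ZerothHomotopy Y :=
  Quot.map f (fun _ _ h => ⟨h.somePath.map hf⟩)


open scoped unitInterval

set_option autoImplicit false

namespace HF
open scoped unitInterval Topology Topology.Homotopy

/-- Clamp a real number to the unit interval. -/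
noncomputable def cl (r : ℝ) : I := Set.projIcc 0 1 zero_le_one r

lemma continuous_cl : Continuous cl := by unfold cl; exact continuous_projIcc

lemma cl_coe (t : I) : cl (t : ℝ) = t := by
  simp [cl]

lemma cl_zero : cl 0 = 0 := by simpa using cl_coe 0

lemma cl_one : cl 1 = 1 := by simpa using cl_coe 1

lemma cl_of_nonpos {r : ℝ} (h : r ≤ 0) : cl r = 0 := Set.projIcc_of_le_left _ h

lemma cl_of_one_le {r : ℝ} (h : 1 ≤ r) : cl r = 1 := Set.projIcc_of_right_le _ h

lemma coe_cl {r : ℝ} (h0 : 0 ≤ r) (h1 : r ≤ 1) : (cl r : ℝ) = r := by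
  rw [cl, Set.projIcc_of_mem _ ⟨h0, h1⟩]

section Cube
variable {n : ℕ}

/-- Rescaled centred coordinates on the cube. -/
noncomputable def uu (s : I) (t : Fin n → I) : Fin n → ℝ :=
  fun i => (1 + (s : ℝ)) * (2 * (t i : ℝ) - 1)

open Classical in
/-- The basic transport formula on cubes. -/
noncomputable def EE {X : Type*} (s : I) (γ : I → X) (g : (Fin n → I) → X) (t : Fin n → I) : X :=
  if ‖uu s t‖ ≤ 1 then g (fun i => cl ((uu s t i + 1) / 2)) else γ (cl (‖uu s t‖ - 1))

lemma norm_uu_le (s : I) (t : Fin n → I) : ‖uu s t‖ ≤ 1 + s := by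
  have hs := s.2.1
  rw [pi_norm_le_iff_of_nonneg (by linarith)]
  intro i
  have h0 := (t i).2.1
  have h1 := (t i).2.2
  rw [uu, Real.norm_eq_abs, abs_mul, abs_of_nonneg (by linarith : (0:ℝ) ≤ 1 + s)]
  have : |2 * (t i : ℝ) - 1| ≤ 1 := by rw [abs_le]; constructor <;> linarith
  nlinarith

lemma norm_uu_bdry (s : I) (t : Fin n → I) (ht : t ∈ Cube.boundary (Fin n)) :
    ‖uu s t‖ = 1 + s := by
  refine le_antisymm (norm_uu_le s t) ?_
  have hs := s.2.1
  obtain ⟨i, hi⟩ := ht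
  have : ‖uu s t i‖ = 1 + s := by
    rw [uu, Real.norm_eq_abs, abs_mul, abs_of_nonneg (by linarith : (0:ℝ) ≤ 1 + s)]
    rcases hi with hi | hi <;> rw [hi] <;> norm_num
  rw [← this]
  exact norm_le_pi_norm (uu s t) i

lemma clamp_bdry (u : Fin n → ℝ) (h : ‖u‖ = 1) :
    (fun i => cl ((u i + 1) / 2)) ∈ Cube.boundary (Fin n) := by
  by_contra hc
  have hlt : ∀ i, ‖u i‖ < 1 := by
    intro i
    by_contra hi
    apply hc
    refine ⟨i, ?_⟩
    rw [Real.norm_eq_abs, not_lt, le_abs] at hi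
    rcases hi with hi | hi
    · right; exact cl_of_one_le (by linarith)
    · left; exact cl_of_nonpos (by linarith)
  have := (pi_norm_lt_iff one_pos).2 hlt
  linarith

lemma EE_zero {X : Type*} (γ : I → X) (g : (Fin n → I) → X) (t : Fin n → I) :
    EE 0 γ g t = g t := by
  have h := norm_uu_le 0 t
  rw [EE, if_pos (by simpa using h)]
  congr 1
  ext i
  simp only [uu]
  rw [coe_cl] <;> norm_num
  · exact (t i).2.1
  · exact (t i).2.2

lemma EE_bdry {X : Type*} (s : I) (γ : I → X) (g : (Fin n → I) → X) (t : Fin n → I)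
    (hb : ∀ t ∈ Cube.boundary (Fin n), g t = γ 0) (ht : t ∈ Cube.boundary (Fin n)) :
    EE s γ g t = γ s := by
  have h := norm_uu_bdry s t ht
  rw [EE]
  split_ifs with h1
  · have hs : (s : ℝ) = 0 := le_antisymm (by linarith) s.2.1
    rw [hb _ (clamp_bdry _ (by rw [h, hs]; norm_num))]
    congr 1
    exact (Subtype.ext hs).symm
  · rw [h]; congr 1; rw [add_sub_cancel_left, cl_coe]

lemma EE_cont {Z X : Type*} [TopologicalSpace Z] [TopologicalSpace X] (s : Z → I)
    (γ : Z → I → X) (g : Z → (Fin n → I) → X) (hs : Continuous s)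
    (hγ : Continuous (fun p : Z × I => γ p.1 p.2))
    (hg : Continuous (fun p : Z × (Fin n → I) => g p.1 p.2))
    (hb : ∀ z, ∀ t ∈ Cube.boundary (Fin n), g z t = γ z 0) :
    Continuous (fun p : Z × (Fin n → I) => EE (s p.1) (γ p.1) (g p.1) p.2) := by
  classical
  have hu : Continuous (fun p : Z × (Fin n → I) => uu (s p.1) p.2) := by
    unfold uu; fun_prop
  have hc := continuous_cl
  unfold EE
  refine Continuous.if_le ?_ ?_ hu.norm continuous_const ?_
  · exact hg.comp (Continuous.prodMk continuous_fst (continuous_pi fun i =>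
      hc.comp (by have := (continuous_apply i).comp hu; simp only [Function.comp_def] at this; fun_prop)))
  · exact hγ.comp (Continuous.prodMk continuous_fst (hc.comp (hu.norm.sub continuous_const)))
  · intro p hp
    rw [hb _ _ (clamp_bdry _ hp), hp]
    simp [cl_zero]

end Cube

section Gloop
variable {N : Type*} {X Y : Type*} [TopologicalSpace X] [TopologicalSpace Y]

lemma homotopic_of {x : X} {g g' : Ω^ N X x} (K : I × (N → I) → X) (hK : Continuous K)
    (h0 : ∀ t, K (0, t) = g t) (h1 : ∀ t, K (1, t) = g' t)
    (hb : ∀ s, ∀ t ∈ Cube.boundary N, K (s, t) = x) : GenLoop.Homotopic g g' :=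
  ⟨{ toFun := K
     continuous_toFun := hK
     map_zero_left := h0
     map_one_left := h1
     prop' := fun s t ht => by
      change K (s, t) = g t
      rw [hb s t ht, GenLoop.boundary g t ht] }⟩

lemma exists_homotopy {x : X} {g g' : Ω^ N X x} (h : GenLoop.Homotopic g g') :
    ∃ K : I × (N → I) → X, Continuous K ∧ (∀ t, K (0, t) = g t) ∧ (∀ t, K (1, t) = g' t) ∧
      (∀ s, ∀ t ∈ Cube.boundary N, K (s, t) = x) := by
  obtain ⟨H⟩ := h
  exact ⟨H, H.continuous, H.apply_zero, H.apply_one, fun s t ht => by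
    rw [H.eq_fst s ht]; exact GenLoop.boundary g t ht⟩

/-- Push-forward of generalized loops. -/
def glMap (φ : C(X, Y)) {x : X} (g : Ω^ N X x) : Ω^ N Y (φ x) :=
  ⟨φ.comp g.1, fun t ht => congrArg φ (GenLoop.boundary g t ht)⟩

lemma glMap_apply (φ : C(X, Y)) {x : X} (g : Ω^ N X x) (t) : glMap φ g t = φ (g t) := rfl

/-- Push-forward on homotopy groups. -/
def hgMap (N : Type*) (φ : C(X, Y)) (x : X) : HomotopyGroup N X x → HomotopyGroup N Y (φ x) :=
  Quotient.map (glMap φ) (by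
    intro a b h
    obtain ⟨K, hK, h0, h1, hb⟩ := exists_homotopy h
    refine homotopic_of (fun p => φ (K p)) (φ.continuous.comp hK) ?_ ?_ ?_
    · intro t; rw [h0]; rfl
    · intro t; rw [h1]; rfl
    · intro s t ht; rw [hb s t ht])

end Gloop

section Tr
variable {n : ℕ} {X Y : Type*} [TopologicalSpace X] [TopologicalSpace Y]

lemma gl_cont {N : Type*} {x : X} (g : Ω^ N X x) : Continuous (fun t => g t) := g.1.continuous

lemma tr_cont {x x' : X} (γ : Path x x') (g : Ω^ (Fin n) X x) :
    Continuous (fun t => EE 1 (fun u => γ u) (fun t => g t) t) := by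
  have h1 : Continuous (fun p : Unit × I => γ p.2) := by fun_prop
  have h2 : Continuous (fun p : Unit × (Fin n → I) => g p.2) := (gl_cont g).comp continuous_snd
  have h3 := EE_cont (Z := Unit) (fun _ => (1 : I)) (fun _ t => γ t) (fun _ t => g t)
    continuous_const h1 h2 (fun _ t ht => by rw [GenLoop.boundary g t ht, γ.source])
  have h4 : Continuous (fun t : Fin n → I => (((), t) : Unit × (Fin n → I))) := by fun_prop
  have h5 := Continuous.comp h3 h4
  simpa only [Function.comp_def] using h5

/-- Transport of generalized loops along a path. -/
noncomputable def tr {x x' : X} (γ : Path x x') (g : Ω^ (Fin n) X x) : Ω^ (Fin n) X x' :=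
  ⟨⟨fun t => EE 1 (fun u => γ u) (fun t => g t) t, tr_cont γ g⟩,
   fun t ht => by
    change EE 1 γ g t = x'
    rw [EE_bdry _ _ _ _ (fun t ht => by rw [GenLoop.boundary g t ht, γ.source]) ht, γ.target]⟩

lemma tr_apply {x x' : X} (γ : Path x x') (g : Ω^ (Fin n) X x) (t) : tr γ g t = EE 1 γ g t := rfl

lemma tr_congr {x x' : X} (γ : Path x x') {g g' : Ω^ (Fin n) X x} (h : GenLoop.Homotopic g g') :
    GenLoop.Homotopic (tr γ g) (tr γ g') := by
  obtain ⟨K, hK, h0, h1, hb⟩ := exists_homotopy h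
  have hb' : ∀ z, ∀ t ∈ Cube.boundary (Fin n), K (z, t) = γ 0 := fun z t ht => by
    rw [hb z t ht, γ.source]
  refine homotopic_of (fun p => EE 1 γ (fun t => K (p.1, t)) p.2) ?_ ?_ ?_ ?_
  · exact EE_cont (fun _ => 1) (fun _ => γ) (fun z t => K (z, t)) continuous_const
      (γ.continuous.comp continuous_snd) hK hb'
  · intro t; simp only [h0, tr_apply]
  · intro t; simp only [h1, tr_apply]
  · intro s t ht
    rw [EE_bdry _ _ _ _ (hb' s) ht, γ.target]

/-- Transport along the track of a homotopy. -/
lemma tr_homotopy {k0 k1 : C(X, Y)} (H : k0.Homotopy k1) (x : X) (g : Ω^ (Fin n) X x) :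
    GenLoop.Homotopic (tr (H.evalAt x) (glMap k0 g)) (glMap k1 g) := by
  have hb' : ∀ z : I, ∀ t ∈ Cube.boundary (Fin n), H (z, g t) = H (cl ((z : ℝ) + (0 : I)), x) :=
    fun z t ht => by
      rw [GenLoop.boundary g t ht]; simp [cl_coe]
  refine homotopic_of
    (fun p => EE (σ p.1) (fun u => H (cl ((p.1 : ℝ) + u), x)) (fun t => H (p.1, g t)) p.2) ?_ ?_ ?_ ?_
  · refine EE_cont (fun z => σ z) (fun z u => H (cl ((z : ℝ) + u), x)) (fun z t => H (z, g t))
      (by fun_prop) ?_ ?_ hb'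
    · have := continuous_cl
      fun_prop
    · have := gl_cont g
      fun_prop
  · intro t
    rw [tr_apply]
    simp only [unitInterval.symm_zero]
    congr 1
    · ext u; simp [cl_coe]
    · ext t; simp [glMap_apply]
  · intro t
    simp only [unitInterval.symm_one, EE_zero]
    simp [glMap_apply]
  · intro s t ht
    rw [EE_bdry _ _ _ _ (hb' s) ht]
    simp [cl_one]

lemma tr_symm_tr {x x' : X} (γ : Path x x') (g : Ω^ (Fin n) X x) :
    GenLoop.Homotopic g (tr γ.symm (tr γ g)) := by
  have hg : ∀ z : I, ∀ t ∈ Cube.boundary (Fin n), g t = γ 0 := fun z t ht => by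
    rw [GenLoop.boundary g t ht, γ.source]
  have hb' : ∀ z : I, ∀ t ∈ Cube.boundary (Fin n), EE z γ g t = γ (cl ((z : ℝ) - (0 : I))) :=
    fun z t ht => by
      rw [EE_bdry _ _ _ _ (hg z) ht]; simp [cl_coe]
  refine homotopic_of
    (fun p => EE p.1 (fun u => γ (cl ((p.1 : ℝ) - u))) (fun t => EE p.1 γ g t) p.2) ?_ ?_ ?_ ?_
  · refine EE_cont (fun z => z) (fun z u => γ (cl ((z : ℝ) - u))) (fun z t => EE z γ g t)
      (by fun_prop) ?_ ?_ hb'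
    · have := continuous_cl
      fun_prop
    · exact EE_cont (fun z => z) (fun _ => γ) (fun _ => g) continuous_id
        (γ.continuous.comp continuous_snd) ((gl_cont g).comp continuous_snd) hg
  · intro t
    simp only [EE_zero]
  · intro t
    rw [tr_apply]
    congr 1
    ext u
    change γ _ = γ (σ u)
    congr 1
    ext
    rw [coe_cl] <;> simp [u.2.2, u.2.1]
  · intro s t ht
    rw [EE_bdry _ _ _ _ (hb' s) ht]
    simp [cl_zero]

/-- Transport on homotopy groups. -/
noncomputable def trEquiv (n : ℕ) {x x' : X} (γ : Path x x') :
    HomotopyGroup (Fin n) X x ≃ HomotopyGroup (Fin n) X x' where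
  toFun := Quotient.map (tr γ) (fun _ _ h => tr_congr γ h)
  invFun := Quotient.map (tr γ.symm) (fun _ _ h => tr_congr γ.symm h)
  left_inv := by
    rintro ⟨g⟩
    exact Quotient.sound (tr_symm_tr γ g).symm
  right_inv := by
    rintro ⟨g⟩
    have h := tr_symm_tr γ.symm g
    rw [Path.symm_symm] at h
    exact Quotient.sound h.symm

lemma card_joined (n : ℕ) {x x' : X} (h : Joined x x') :
    Nat.card (HomotopyGroup (Fin n) X x) = Nat.card (HomotopyGroup (Fin n) X x') :=
  Nat.card_congr (trEquiv n h.somePath)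

lemma bij_of_homotopy {k : C(X, X)} (H : (ContinuousMap.id X).Homotopy k) (n : ℕ) (x : X) :
    Function.Bijective (hgMap (Fin n) k x) := by
  have : hgMap (Fin n) k x = trEquiv n (H.evalAt x) := by
    ext ⟨g⟩
    exact Quotient.sound (tr_homotopy H x g).symm
  rw [this]
  exact Equiv.bijective _

/-- Homotopy equivalences preserve the cardinalities of homotopy groups. -/
lemma card_hequiv (φ : C(X, Y)) (ψ : C(Y, X))
    (H : (ContinuousMap.id X).Homotopy (ψ.comp φ)) (K : (ContinuousMap.id Y).Homotopy (φ.comp ψ))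
    (n : ℕ) (x : X) :
    Nat.card (HomotopyGroup (Fin n) X x) = Nat.card (HomotopyGroup (Fin n) Y (φ x)) := by
  have h1 := bij_of_homotopy H n x
  have h2 := bij_of_homotopy K n (φ x)
  have e1 : hgMap (Fin n) (ψ.comp φ) x = hgMap (Fin n) ψ (φ x) ∘ hgMap (Fin n) φ x := by
    ext ⟨g⟩; rfl
  have e2 : hgMap (Fin n) (φ.comp ψ) (φ x) =
      hgMap (Fin n) φ (ψ (φ x)) ∘ hgMap (Fin n) ψ (φ x) := by
    ext ⟨g⟩; rfl
  rw [e1] at h1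
  rw [e2] at h2
  have hs : Function.Bijective (hgMap (Fin n) ψ (φ x)) :=
    ⟨h2.1.of_comp, h1.2.of_comp⟩
  have h3 : Function.Bijective (hgMap (Fin n) φ x) := by
    exact (Function.Bijective.of_comp_iff' hs _).1 h1
  exact Nat.card_congr (Equiv.ofBijective _ h3)

end Tr
end HF

open scoped unitInterval
set_option autoImplicit false

namespace HF
open scoped unitInterval Topology Topology.Homotopy

section Loop
variable {X Y : Type*} [TopologicalSpace X] [TopologicalSpace Y]

lemma joined_of_homotopic {x y : X} {p q : Path x y} (h : p.Homotopic q) : Joined p q := by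
  obtain ⟨H⟩ := h
  refine ⟨⟨⟨fun s => H.eval s, ?_⟩, H.eval_zero, H.eval_one⟩⟩
  apply Path.continuous_uncurry_iff.1
  exact H.continuous

lemma homotopic_of_joined {x y : X} {p q : Path x y} (h : Joined p q) : p.Homotopic q := by
  obtain ⟨P⟩ := h
  refine ⟨⟨⟨⟨fun s => P s.1 s.2, by fun_prop⟩, fun t => by simp, fun t => by simp⟩, ?_⟩⟩
  intro s t ht
  rcases ht with rfl | ht
  · simp
  · rw [Set.mem_singleton_iff] at ht
    subst ht; simp

lemma homotopic_iff_joined {x y : X} {p q : Path x y} : p.Homotopic q ↔ Joined p q :=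
  ⟨joined_of_homotopic, homotopic_of_joined⟩

lemma cons_bdry {m : ℕ} (u : I) (t : Fin m → I) :
    (Fin.cons u t : Fin (m + 1) → I) ∈ Cube.boundary (Fin (m + 1)) ↔
      (u = 0 ∨ u = 1) ∨ t ∈ Cube.boundary (Fin m) := by
  simp only [Cube.boundary, Set.mem_ofPred_eq, Fin.exists_fin_succ, Fin.cons_zero, Fin.cons_succ]

lemma cons_cont {m : ℕ} : Continuous (fun p : (Fin m → I) × I =>
    (Fin.cons p.2 p.1 : Fin (m + 1) → I)) := by
  refine continuous_pi fun i => ?_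
  refine Fin.cases ?_ (fun j => ?_) i
  · simpa using continuous_snd
  · simp only [Fin.cons_succ]; fun_prop

lemma tail_cont {m : ℕ} : Continuous (fun t : Fin (m + 1) → I => (Fin.tail t : Fin m → I)) := by
  unfold Fin.tail; fun_prop

/-- Loops of dimension `m+1` as loops of dimension `m` in the loop space. -/
def toLp (m : ℕ) {x : X} (g : Ω^ (Fin (m + 1)) X x) : Ω^ (Fin m) (Path x x) (Path.refl x) :=
  ⟨⟨fun t => ⟨⟨fun u => g (Fin.cons u t), (gl_cont g).comp
        (cons_cont.comp (Continuous.prodMk continuous_const continuous_id))⟩,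
      GenLoop.boundary g _ ((cons_bdry _ _).2 (by simp)),
      GenLoop.boundary g _ ((cons_bdry _ _).2 (by simp))⟩,
    Path.continuous_uncurry_iff.1 ((gl_cont g).comp cons_cont)⟩,
   fun t ht => by
    ext u
    exact GenLoop.boundary g _ ((cons_bdry _ _).2 (Or.inr ht))⟩

/-- Inverse of `toLp`. -/
def ofLp (m : ℕ) {x : X} (g : Ω^ (Fin m) (Path x x) (Path.refl x)) : Ω^ (Fin (m + 1)) X x :=
  ⟨⟨fun t => g (Fin.tail t) (t 0), by
      have h1 : Continuous (fun t : Fin (m + 1) → I => g (Fin.tail t)) := (gl_cont g).comp tail_cont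
      fun_prop⟩,
   fun t ht => by
    change g (Fin.tail t) (t 0) = x
    rw [← Fin.cons_self_tail t, cons_bdry] at ht
    rcases ht with (ht | ht) | ht
    · rw [ht]; simp
    · rw [ht]; simp
    · rw [GenLoop.boundary g _ ht]; rfl⟩

lemma toLp_apply (m : ℕ) {x : X} (g : Ω^ (Fin (m + 1)) X x) (t u) :
    toLp m g t u = g (Fin.cons u t) := rfl

lemma ofLp_apply (m : ℕ) {x : X} (g : Ω^ (Fin m) (Path x x) (Path.refl x)) (t) :
    ofLp m g t = g (Fin.tail t) (t 0) := rfl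

lemma card_loop (m : ℕ) (x : X) : Nat.card (HomotopyGroup (Fin (m + 1)) X x) =
    Nat.card (HomotopyGroup (Fin m) (Path x x) (Path.refl x)) := by
  refine Nat.card_congr
    { toFun := Quotient.map (toLp m) ?_
      invFun := Quotient.map (ofLp m) ?_
      left_inv := ?_
      right_inv := ?_ }
  · intro a b h
    obtain ⟨K, hK, h0, h1, hb⟩ := exists_homotopy h
    refine homotopic_of (fun p => ⟨⟨fun u => K (p.1, Fin.cons u p.2), ?_⟩, ?_, ?_⟩) ?_ ?_ ?_ ?_
    · exact hK.comp (Continuous.prodMk continuous_const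
        (cons_cont.comp (Continuous.prodMk continuous_const continuous_id)))
    · exact hb _ _ ((cons_bdry _ _).2 (by simp))
    · exact hb _ _ ((cons_bdry _ _).2 (by simp))
    · apply Path.continuous_uncurry_iff.1
      change Continuous (fun q : (I × (Fin m → I)) × I => K (q.1.1, Fin.cons q.2 q.1.2))
      refine hK.comp (Continuous.prodMk (by fun_prop) (cons_cont.comp
        (Continuous.prodMk (by fun_prop) (by fun_prop))))
    · intro t; ext u; exact h0 _
    · intro t; ext u; exact h1 _
    · intro s t ht; ext u; exact hb _ _ ((cons_bdry _ _).2 (Or.inr ht))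
  · intro a b h
    obtain ⟨K, hK, h0, h1, hb⟩ := exists_homotopy h
    refine homotopic_of (fun p => K (p.1, Fin.tail p.2) (p.2 0)) ?_ ?_ ?_ ?_
    · have h1 : Continuous (fun p : I × (Fin (m + 1) → I) => K (p.1, Fin.tail p.2)) :=
        hK.comp (Continuous.prodMk continuous_fst (tail_cont.comp continuous_snd))
      fun_prop
    · intro t; rw [h0]; rfl
    · intro t; rw [h1]; rfl
    · intro s t ht
      rw [← Fin.cons_self_tail t, cons_bdry] at ht
      rcases ht with (ht | ht) | ht
      · simp only; rw [ht]; simp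
      · simp only; rw [ht]; simp
      · simp only; rw [hb _ _ ht]; rfl
  · rintro ⟨g⟩
    refine congrArg (Quotient.mk _) ?_
    ext t
    rw [ofLp_apply, toLp_apply, Fin.cons_self_tail]
  · rintro ⟨g⟩
    refine congrArg (Quotient.mk _) ?_
    ext t u
    rw [toLp_apply, ofLp_apply, Fin.tail_cons, Fin.cons_zero]

lemma card_homeo (e : X ≃ₜ Y) (m : ℕ) (x : X) (y : Y) (h : e x = y) :
    Nat.card (HomotopyGroup (Fin m) X x) = Nat.card (HomotopyGroup (Fin m) Y y) := by
  subst h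
  refine card_hequiv (⟨e, e.continuous⟩ : C(X, Y)) (⟨e.symm, e.symm.continuous⟩ : C(Y, X)) ?_ ?_ m x
  · exact (ContinuousMap.Homotopy.refl _).cast rfl (by ext; simp)
  · exact (ContinuousMap.Homotopy.refl _).cast rfl (by ext; simp)

lemma card_pi_one (x : X) : Nat.card (HomotopyGroup (Fin 1) X x) =
    Nat.card (FundamentalGroup X x) :=
  Nat.card_congr (HomotopyGroup.pi1EquivFundamentalGroup (X := X) (x := x))

end Loop

section Fib
variable {A B : Type*} [TopologicalSpace A] [TopologicalSpace B]

/-- A point of the homotopy fiber. -/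
def fpt (g : C(A, B)) {b : B} (a : A) (q : Path (g a) b) : HomotopyFiber g b :=
  ⟨(a, q.toContinuousMap), q.source, q.target⟩

/-- The path component of a point of the homotopy fiber. -/
def fpath (g : C(A, B)) {b : B} (z : HomotopyFiber g b) : Path (g z.1.1) b :=
  ⟨z.1.2, z.2.1, z.2.2⟩

lemma fpt_fpath (g : C(A, B)) {b : B} (z : HomotopyFiber g b) : fpt g z.1.1 (fpath g z) = z := rfl

lemma continuous_fiberIncl (g : C(A, B)) (b : B) : Continuous (fiberIncl g b) := by
  unfold fiberIncl; fun_prop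

lemma continuous_fiber_mk {Z : Type*} [TopologicalSpace Z] (g : C(A, B)) {b : B}
    (F : Z → HomotopyFiber g b) (h1 : Continuous fun z => (F z).1.1)
    (h2 : Continuous fun p : Z × I => (F p.1).1.2 p.2) : Continuous F := by
  refine continuous_induced_rng.2 (Continuous.prodMk h1 ?_)
  exact ContinuousMap.continuous_of_continuous_uncurry _ h2

lemma joined_trans (g : C(A, B)) {b : B} {a' a : A} (δ : Path a' a) (q : Path (g a) b) :
    Joined (fpt g a' ((δ.map g.continuous).trans q)) (fpt g a q) := by
  let T := (δ.map g.continuous).trans q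
  have hT : Continuous T := T.continuous
  have hcl := continuous_cl
  have e0 : ∀ s : I, T (cl ((s : ℝ) / 2 + (1 - s / 2) * (0 : I))) = g (δ s) := by
    intro s
    have hs := s.2.1
    have hs1 := s.2.2
    have hc : (cl ((s : ℝ) / 2 + (1 - s / 2) * (0 : I)) : ℝ) = s / 2 := by
      rw [coe_cl] <;> simp <;> linarith
    rw [Path.trans_apply, dif_pos (by rw [hc]; linarith)]
    rw [Path.map_coe, Function.comp_apply]
    congr 2
    ext
    simp only [hc]; ring
  have e1 : ∀ s : I, T (cl ((s : ℝ) / 2 + (1 - s / 2) * (1 : I))) = b := by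
    intro s
    have : (s : ℝ) / 2 + (1 - s / 2) * (1 : I) = 1 := by simp
    rw [this, cl_one]; exact T.target
  let F : I → HomotopyFiber g b := fun s =>
    ⟨(δ s, ⟨fun t => T (cl ((s : ℝ) / 2 + (1 - s / 2) * t)), by fun_prop⟩), e0 s, e1 s⟩
  refine ⟨⟨⟨F, ?_⟩, ?_, ?_⟩⟩
  · refine continuous_fiber_mk g F ?_ ?_
    · exact δ.continuous
    · change Continuous (fun p : I × I => T (cl ((p.1 : ℝ) / 2 + (1 - p.1 / 2) * p.2)))
      fun_prop
  · apply Subtype.ext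
    refine Prod.ext δ.source ?_
    ext t
    change T (cl (((0 : I) : ℝ) / 2 + (1 - (0 : I) / 2) * t)) = T t
    congr 1
    simp [cl_coe]
  · apply Subtype.ext
    refine Prod.ext δ.target ?_
    ext t
    change T (cl (((1 : I) : ℝ) / 2 + (1 - (1 : I) / 2) * t)) = q t
    have h0 := t.2.1
    have h1 := t.2.2
    have hc : (cl (((1 : I) : ℝ) / 2 + (1 - (1 : I) / 2) * t) : ℝ) = (1 + t) / 2 := by
      rw [coe_cl] <;> simp <;> linarith
    by_cases ht : (t : ℝ) = 0
    · have ht' : t = 0 := Subtype.ext ht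
      have := e0 1
      subst ht'
      rw [this, δ.target, q.source]
    · have hpos : 0 < (t : ℝ) := lt_of_le_of_ne h0 (Ne.symm ht)
      rw [Path.trans_apply, dif_neg (by rw [hc]; intro h; linarith)]
      congr 1
      ext
      simp only [hc]; ring

lemma joined_of_hom (g : C(A, B)) {b : B} {a : A} {q q' : Path (g a) b} (h : q.Homotopic q') :
    Joined (fpt g a q) (fpt g a q') := by
  obtain ⟨P⟩ := joined_of_homotopic h
  let F : I → HomotopyFiber g b := fun s => fpt g a (P s)
  refine ⟨⟨⟨F, ?_⟩, ?_, ?_⟩⟩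
  · refine continuous_fiber_mk g F continuous_const ?_
    change Continuous (fun p : I × I => P p.1 p.2)
    fun_prop
  · simp [F]
  · simp [F]

lemma hom_of_joined (g : C(A, B)) {b : B} {a a' : A} {q : Path (g a) b} {q' : Path (g a') b}
    (h : Joined (fpt g a q) (fpt g a' q')) :
    ∃ δ : Path a a', q.Homotopic ((δ.map g.continuous).trans q') := by
  obtain ⟨P⟩ := h
  let δ : Path a a' := P.map (continuous_fiberIncl g b)
  refine ⟨δ, ?_⟩
  let sq : C(I × I, B) := ⟨fun p => (P p.1).1.2 p.2, by fun_prop⟩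
  have hI : ContractibleSpace I :=
    (convex_Icc (0 : ℝ) 1).contractibleSpace ⟨0, by simp⟩
  let p1 : Path ((0, 0) : I × I) (1, 1) :=
    ((Path.refl (0 : I)).prod Path.id).trans (Path.id.prod (Path.refl (1 : I)))
  let p2 : Path ((0, 0) : I × I) (1, 1) :=
    (Path.id.prod (Path.refl (0 : I))).trans ((Path.refl (1 : I)).prod Path.id)
  have hp : p1.Homotopic p2 := SimplyConnectedSpace.paths_homotopic p1 p2
  have hs0 : g a = sq (0, 0) := by
    change g a = (P 0).1.2 0
    rw [P.source]; exact q.source.symm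
  have hs1 : b = sq (1, 1) := by
    exact (P 1).2.2.symm
  have h2 := (hp.map sq).pathCast hs0 hs1
  have e1 : (p1.map sq.continuous).cast hs0 hs1 = q.trans (Path.refl b) := by
    ext t
    simp only [p1, Path.map_trans, Path.cast_coe, Path.trans_apply]
    split_ifs
    · change (P 0).1.2 _ = _
      rw [P.source]; rfl
    · exact (P _).2.2
  have e2 : (p2.map sq.continuous).cast hs0 hs1 = (δ.map g.continuous).trans q' := by
    ext t
    simp only [p2, Path.map_trans, Path.cast_coe, Path.trans_apply]
    split_ifs
    · exact (P _).2.1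
    · change (P 1).1.2 _ = _
      rw [P.target]; rfl
  rw [e1, e2] at h2
  exact Path.Homotopic.trans ⟨(Path.Homotopy.transRefl q).symm⟩ h2

end Fib
end HF

open scoped unitInterval
set_option autoImplicit false

namespace HF
open scoped unitInterval Topology Topology.Homotopy

lemma card_of_surj {P S T : Type*} (u : P → S) (v : P → T) (hu : Function.Surjective u)
    (hv : Function.Surjective v) (h : ∀ p q, u p = u q ↔ v p = v q) : Nat.card S = Nat.card T := by
  refine Nat.card_eq_of_bijective (fun s => v (Function.surjInv hu s)) ⟨?_, ?_⟩
  · intro s s' hs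
    have := (h _ _).2 hs
    rwa [Function.surjInv_eq hu, Function.surjInv_eq hu] at this
  · intro t
    obtain ⟨p, rfl⟩ := hv t
    refine ⟨u p, ?_⟩
    rw [← h]
    exact Function.surjInv_eq hu _

section FG
variable {X Y : Type*} [TopologicalSpace X] [TopologicalSpace Y]

lemma toPi0_eq {x y : X} : toPi0 x = toPi0 y ↔ Joined x y := by
  unfold toPi0
  exact Quotient.eq (r := pathSetoid X)

lemma toPi0_surj : Function.Surjective (toPi0 : X → ZerothHomotopy X) := Quot.mk_surjective

lemma pi0Map_toPi0 {f : X → Y} (hf : Continuous f) (x : X) : pi0Map hf (toPi0 x) = toPi0 (f x) :=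
  rfl

/-- The class of a loop. -/
def fg {x : X} (p : Path x x) : FundamentalGroup X x := Path.Homotopic.Quotient.mk p

lemma fg_surj {x : X} : Function.Surjective (fg : Path x x → FundamentalGroup X x) :=
  Path.Homotopic.Quotient.mk_surjective

lemma fg_eq {x : X} {p q : Path x x} : fg p = fg q ↔ p.Homotopic q := Path.Homotopic.Quotient.eq

lemma fg_mul {x : X} (p q : Path x x) : fg p * fg q = fg (q.trans p) := rfl

lemma fg_one {x : X} : (1 : FundamentalGroup X x) = fg (Path.refl x) := rfl

lemma map_fg (g : C(X, Y)) {x : X} (p : Path x x) :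
    FundamentalGroup.map g x (fg p) = fg (p.map g.continuous) := rfl

end FG

section Fib
variable {A B : Type*} [TopologicalSpace A] [TopologicalSpace B]

/-- Components of the homotopy fiber lying over the component of `a`. -/
abbrev Over (g : C(A, B)) (b : B) (a : A) : Type _ :=
  {w : ZerothHomotopy (HomotopyFiber g b) // pi0Map (continuous_fiberIncl g b) w = toPi0 a}

lemma joined_iff (g : C(A, B)) {a : A} (β β' : Path (g a) (g a)) :
    Joined (fpt g a β) (fpt g a β') ↔
      (fg β)⁻¹ * fg β' ∈ (FundamentalGroup.map g a).range := by
  constructor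
  · intro h
    obtain ⟨δ, hδ⟩ := hom_of_joined g h
    have h1 : fg β = fg β' * FundamentalGroup.map g a (fg δ) := by
      rw [map_fg, fg_mul, fg_eq]; exact hδ
    refine ⟨(fg δ)⁻¹, ?_⟩
    rw [h1, map_inv]; group
  · rintro ⟨d, hd⟩
    obtain ⟨δ, rfl⟩ := fg_surj d
    have h1 : fg β' = fg ((δ.map g.continuous).trans β) := by
      rw [← fg_mul, ← map_fg, hd]; group
    exact (joined_trans g δ β).symm.trans (joined_of_hom g (fg_eq.1 h1.symm))

lemma card_over (g : C(A, B)) (a : A) :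
    Nat.card (Over g (g a) a) = (FundamentalGroup.map g a).range.index := by
  let v : Path (g a) (g a) → Over g (g a) a := fun β => ⟨toPi0 (fpt g a β), rfl⟩
  let u : Path (g a) (g a) → FundamentalGroup B (g a) ⧸ (FundamentalGroup.map g a).range :=
    fun β => QuotientGroup.mk (fg β)
  refine (card_of_surj u v ?_ ?_ ?_).symm
  · exact (QuotientGroup.mk_surjective).comp fg_surj
  · rintro ⟨w, hw⟩
    obtain ⟨z, rfl⟩ := toPi0_surj w
    rw [pi0Map_toPi0, toPi0_eq] at hw
    obtain ⟨δ⟩ := hw.symm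
    refine ⟨(δ.map g.continuous).trans (fpath g z), ?_⟩
    apply Subtype.ext
    change toPi0 _ = toPi0 _
    rw [toPi0_eq]
    exact joined_trans g δ (fpath g z)
  · intro p q
    rw [Subtype.ext_iff]
    change _ ↔ toPi0 _ = toPi0 _
    rw [toPi0_eq, joined_iff, QuotientGroup.eq]

/-- The map induced on loop spaces. -/
def Lg (g : C(A, B)) (a : A) : C(Path a a, Path (g a) (g a)) :=
  ⟨fun γ => γ.map g.continuous, by
    apply Path.continuous_uncurry_iff.1
    change Continuous (fun p : Path a a × I => g (p.1 p.2))
    fun_prop⟩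

lemma Lg_refl (g : C(A, B)) (a : A) : Lg g a (Path.refl a) = Path.refl (g a) := rfl

/-- The base point of the homotopy fiber. -/
def z0 (g : C(A, B)) (a : A) : HomotopyFiber g (g a) := fpt g a (Path.refl (g a))

/-- inclusion as a continuous map -/
def inclC (g : C(A, B)) (b : B) : C(HomotopyFiber g b, A) := ⟨fiberIncl g b, continuous_fiberIncl g b⟩

/-- Loops in the fiber are the fiber of the loop map. -/
def Phi (g : C(A, B)) (a : A) :
    Path (z0 g a) (z0 g a) ≃ₜ HomotopyFiber (Lg g a) (Lg g a (Path.refl a)) where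
  toFun p := ⟨(p.map (continuous_fiberIncl g (g a)),
    ⟨fun t => ⟨⟨fun s => (p s).1.2 t, by fun_prop⟩,
      by change (p 0).1.2 t = g a; rw [p.source]; rfl,
      by change (p 1).1.2 t = g a; rw [p.target]; rfl⟩, by
        apply Path.continuous_uncurry_iff.1
        change Continuous (fun q : I × I => (p q.2).1.2 q.1)
        fun_prop⟩), by
      ext s; exact (p s).2.1, by
      ext s; exact (p s).2.2⟩
  invFun w := ⟨⟨fun s => ⟨(w.1.1 s, ⟨fun t => w.1.2 t s, by fun_prop⟩),
      by change w.1.2 0 s = _; rw [w.2.1]; rfl, by change w.1.2 1 s = _; rw [w.2.2]; rfl⟩, by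
        refine continuous_fiber_mk g _ ?_ ?_
        · exact w.1.1.continuous
        · change Continuous (fun q : I × I => w.1.2 q.2 q.1)
          fun_prop⟩, by
      apply Subtype.ext
      refine Prod.ext w.1.1.source ?_
      ext t; exact (w.1.2 t).source, by
      apply Subtype.ext
      refine Prod.ext w.1.1.target ?_
      ext t; exact (w.1.2 t).target⟩
  left_inv p := rfl
  right_inv w := rfl
  continuous_toFun := by
    refine continuous_fiber_mk (Lg g a) _ ?_ ?_
    · apply Path.continuous_uncurry_iff.1
      change Continuous (fun q : Path (z0 g a) (z0 g a) × I => (q.1 q.2).1.1)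
      fun_prop
    · apply Path.continuous_uncurry_iff.1
      change Continuous (fun q : (Path (z0 g a) (z0 g a) × I) × I => (q.1.1 q.2).1.2 q.1.2)
      fun_prop
  continuous_invFun := by
    apply Path.continuous_uncurry_iff.1
    refine continuous_fiber_mk g _ ?_ ?_
    · change Continuous (fun q : HomotopyFiber (Lg g a) (Lg g a (Path.refl a)) × I => q.1.1.1 q.2)
      fun_prop
    · change Continuous (fun q : (HomotopyFiber (Lg g a) (Lg g a (Path.refl a)) × I) × I =>
        q.1.1.1.2 q.2 q.1.2)
      fun_prop

lemma Phi_refl (g : C(A, B)) (a : A) : Phi g a (Path.refl _) = z0 (Lg g a) (Path.refl a) := rfl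

/-- The inclusion on fundamental groups. -/
noncomputable def inclFG (g : C(A, B)) (a : A) :
    FundamentalGroup (HomotopyFiber g (g a)) (z0 g a) →* FundamentalGroup A a :=
  FundamentalGroup.map (inclC g (g a)) (z0 g a)

lemma inclFG_fg (g : C(A, B)) (a : A) (p : Path (z0 g a) (z0 g a)) :
    inclFG g a (fg p) = fg (Phi g a p).1.1 := rfl

lemma range_incl (g : C(A, B)) (a : A) :
    (inclFG g a).range = (FundamentalGroup.map g a).ker := by
  ext d
  obtain ⟨γ, rfl⟩ := fg_surj d
  rw [MonoidHom.mem_ker, map_fg, fg_one, fg_eq]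
  constructor
  · rintro ⟨e, he⟩
    obtain ⟨p, rfl⟩ := fg_surj e
    rw [inclFG_fg, fg_eq] at he
    have h1 : ((Phi g a p).1.1.map g.continuous).Homotopic (Path.refl (g a)) :=
      homotopic_of_joined ⟨fpath (Lg g a) (Phi g a p)⟩
    exact (he.symm.map g).trans h1
  · intro h
    obtain ⟨P⟩ := joined_of_homotopic h
    let w : HomotopyFiber (Lg g a) (Lg g a (Path.refl a)) := fpt (Lg g a) γ P
    refine ⟨fg ((Phi g a).symm w), ?_⟩
    rw [inclFG_fg, Homeomorph.apply_symm_apply]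
    rfl

lemma card_ker_incl (g : C(A, B)) (a : A) :
    Nat.card (inclFG g a).ker = Nat.card (Over (Lg g a) (Lg g a (Path.refl a)) (Path.refl a)) := by
  let S := {p : Path (z0 g a) (z0 g a) // (Phi g a p).1.1.Homotopic (Path.refl a)}
  let u : S → (inclFG g a).ker := fun p => ⟨fg p.1, by
    rw [MonoidHom.mem_ker, inclFG_fg, fg_one, fg_eq]; exact p.2⟩
  let v : S → Over (Lg g a) (Lg g a (Path.refl a)) (Path.refl a) := fun p => ⟨toPi0 (Phi g a p.1), by
    rw [pi0Map_toPi0, toPi0_eq]; exact joined_of_homotopic p.2⟩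
  refine card_of_surj u v ?_ ?_ ?_
  · rintro ⟨d, hd⟩
    obtain ⟨p, rfl⟩ := fg_surj d
    rw [MonoidHom.mem_ker, inclFG_fg, fg_one, fg_eq] at hd
    exact ⟨⟨p, hd⟩, rfl⟩
  · rintro ⟨w, hw⟩
    obtain ⟨z, rfl⟩ := toPi0_surj w
    have hw' := hw
    rw [pi0Map_toPi0, toPi0_eq] at hw'
    refine ⟨⟨(Phi g a).symm z, ?_⟩, ?_⟩
    · rw [Homeomorph.apply_symm_apply]
      exact homotopic_of_joined hw'
    · apply Subtype.ext
      change toPi0 _ = toPi0 _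
      rw [Homeomorph.apply_symm_apply]
  · intro p q
    rw [Subtype.ext_iff, Subtype.ext_iff]
    change fg _ = fg _ ↔ toPi0 _ = toPi0 _
    rw [fg_eq, toPi0_eq, homotopic_iff_joined]
    constructor
    · rintro ⟨P⟩
      exact ⟨P.map (Phi g a).continuous⟩
    · rintro ⟨P⟩
      have := P.map (Phi g a).symm.continuous
      rw [Homeomorph.symm_apply_apply, Homeomorph.symm_apply_apply] at this
      exact ⟨this⟩

lemma card_fiber (g : C(A, B)) (a : A) :
    Nat.card (FundamentalGroup (HomotopyFiber g (g a)) (z0 g a)) =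
      Nat.card (FundamentalGroup.map g a).ker *
        (FundamentalGroup.map (Lg g a) (Path.refl a)).range.index := by
  rw [← range_incl, ← card_over, ← card_ker_incl, mul_comm,
    ← Subgroup.index_ker, Subgroup.card_mul_index]

end Fib
end HF

open scoped unitInterval
set_option autoImplicit false

namespace HF
open scoped unitInterval Topology Topology.Homotopy

universe u v

/-- Order of the kernel on `π_{n+1}`. -/
noncomputable def kk : ℕ → ∀ {A : Type u} {B : Type v} [TopologicalSpace A] [TopologicalSpace B]
    (_ : C(A, B)) (_ : A), ℕ
  | 0, _, _, _, _, g, a => Nat.card (FundamentalGroup.map g a).ker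
  | n + 1, _, _, _, _, g, a => kk n (Lg g a) (Path.refl a)

/-- Order of the image on `π_{n+1}`. -/
noncomputable def ii : ℕ → ∀ {A : Type u} {B : Type v} [TopologicalSpace A] [TopologicalSpace B]
    (_ : C(A, B)) (_ : A), ℕ
  | 0, _, _, _, _, g, a => Nat.card (FundamentalGroup.map g a).range
  | n + 1, _, _, _, _, g, a => ii n (Lg g a) (Path.refl a)

/-- Order of the cokernel on `π_{n+1}`. -/
noncomputable def cc : ℕ → ∀ {A : Type u} {B : Type v} [TopologicalSpace A] [TopologicalSpace B]
    (_ : C(A, B)) (_ : A), ℕ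
  | 0, _, _, _, _, g, a => (FundamentalGroup.map g a).range.index
  | n + 1, _, _, _, _, g, a => cc n (Lg g a) (Path.refl a)

lemma card_A (n : ℕ) : ∀ {A : Type u} {B : Type v} [TopologicalSpace A] [TopologicalSpace B]
    (g : C(A, B)) (a : A),
    Nat.card (HomotopyGroup (Fin (n + 1)) A a) = kk n g a * ii n g a := by
  induction n with
  | zero =>
    intro A B _ _ g a
    rw [card_pi_one]
    change _ = Nat.card (FundamentalGroup.map g a).ker * Nat.card (FundamentalGroup.map g a).range
    rw [← Subgroup.index_ker, Subgroup.card_mul_index]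
  | succ n ih =>
    intro A B _ _ g a
    rw [card_loop]
    exact ih (Lg g a) (Path.refl a)

lemma card_B (n : ℕ) : ∀ {A : Type u} {B : Type v} [TopologicalSpace A] [TopologicalSpace B]
    (g : C(A, B)) (a : A),
    Nat.card (HomotopyGroup (Fin (n + 1)) B (g a)) = ii n g a * cc n g a := by
  induction n with
  | zero =>
    intro A B _ _ g a
    rw [card_pi_one]
    exact (Subgroup.card_mul_index _).symm
  | succ n ih =>
    intro A B _ _ g a
    rw [card_loop]
    exact ih (Lg g a) (Path.refl a)

lemma card_F (n : ℕ) : ∀ {A : Type u} {B : Type v} [TopologicalSpace A] [TopologicalSpace B]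
    (g : C(A, B)) (a : A),
    Nat.card (HomotopyGroup (Fin (n + 1)) (HomotopyFiber g (g a)) (z0 g a)) =
      kk n g a * cc (n + 1) g a := by
  induction n with
  | zero =>
    intro A B _ _ g a
    rw [card_pi_one]
    exact card_fiber g a
  | succ n ih =>
    intro A B _ _ g a
    rw [card_loop, card_homeo (Phi g a) (n + 1) _ _ (Phi_refl g a)]
    exact ih (Lg g a) (Path.refl a)

lemma sgn (n : ℕ) : ((-1 : ℤ) ^ n = 1 ∧ (-1 : ℤ) ^ (n + 1) = -1) ∨
    ((-1 : ℤ) ^ n = -1 ∧ (-1 : ℤ) ^ (n + 1) = 1) := by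
  rcases neg_one_pow_eq_or ℤ n with h | h <;> simp [pow_succ, h]

lemma arith (a b F k i c : ℕ → ℕ) (ha : ∀ n, a n = k n * i n) (hb : ∀ n, b n = i n * c n)
    (hF : ∀ n, F n = k n * c (n + 1)) (ha0 : ∀ n, a n ≠ 0) (hb0 : ∀ n, b n ≠ 0)
    (N : ℕ) (haN : ∀ n, N ≤ n → a n = 1) (hbN : ∀ n, N ≤ n → b n = 1) :
    (∏ᶠ n, (F n : ℚ) ^ ((-1 : ℤ) ^ (n + 1))) * c 0 =
      (∏ᶠ n, (a n : ℚ) ^ ((-1 : ℤ) ^ (n + 1))) * (∏ᶠ n, (b n : ℚ) ^ ((-1 : ℤ) ^ (n + 1)))⁻¹ ∧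
    c 0 ≠ 0 := by
  have k0 : ∀ n, (k n : ℚ) ≠ 0 := fun n h => ha0 n (by rw [ha]; simp [Nat.cast_eq_zero.1 h])
  have i0 : ∀ n, (i n : ℚ) ≠ 0 := fun n h => ha0 n (by rw [ha]; simp [Nat.cast_eq_zero.1 h])
  have c0 : ∀ n, (c n : ℚ) ≠ 0 := fun n h => hb0 n (by rw [hb]; simp [Nat.cast_eq_zero.1 h])
  have k1 : ∀ n, N ≤ n → k n = 1 := fun n h => by
    have := haN n h; rw [ha] at this; exact Nat.eq_one_of_mul_eq_one_right this
  have c1 : ∀ n, N ≤ n → c n = 1 := fun n h => by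
    have := hbN n h; rw [hb] at this; exact Nat.eq_one_of_mul_eq_one_left this
  refine ⟨?_, by exact_mod_cast c0 0⟩
  have fp : ∀ G : ℕ → ℕ, (∀ n, N ≤ n → G n = 1) →
      (∏ᶠ n, (G n : ℚ) ^ ((-1 : ℤ) ^ (n + 1))) =
        ∏ n ∈ Finset.range N, (G n : ℚ) ^ ((-1 : ℤ) ^ (n + 1)) := by
    intro G hG
    apply finprod_eq_prod_of_mulSupport_subset
    intro n hn
    by_contra h
    simp only [Finset.coe_range, Set.mem_Iio, not_lt] at h
    exact hn (by simp [hG n h])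
  rw [fp a haN, fp b hbN, fp F (fun n h => by rw [hF, k1 n h, c1 (n + 1) (by omega)])]
  have key : ∀ M, (∏ n ∈ Finset.range M, (F n : ℚ) ^ ((-1 : ℤ) ^ (n + 1))) * c 0 =
      (∏ n ∈ Finset.range M, (a n : ℚ) ^ ((-1 : ℤ) ^ (n + 1))) *
      (∏ n ∈ Finset.range M, (b n : ℚ) ^ ((-1 : ℤ) ^ (n + 1)))⁻¹ * (c M : ℚ) ^ ((-1 : ℤ) ^ M) := by
    intro M
    induction M with
    | zero => simp
    | succ M ih =>
      rw [Finset.prod_range_succ, Finset.prod_range_succ, Finset.prod_range_succ, mul_right_comm,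
        ih, hF, ha, hb]
      have := k0 M
      have := i0 M
      have := c0 M
      have := c0 (M + 1)
      push_cast
      rcases sgn M with ⟨h1, h2⟩ | ⟨h1, h2⟩
      · rw [h1, h2]
        simp only [zpow_neg, zpow_one, mul_inv, inv_inv]
        field_simp
      · rw [h1, h2]
        simp only [zpow_neg, zpow_one, mul_inv, inv_inv]
        field_simp
  rw [key, c1 N le_rfl]
  simp

lemma mu_fiber {A : Type u} {B : Type v} [TopologicalSpace A] [TopologicalSpace B]
    (hA : IsLocallyFinite A) (hB : IsLocallyFinite B) (g : C(A, B)) (a : A) :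
    mu (HomotopyFiber g (g a)) (z0 g a) * Nat.card (Over g (g a) a) =
      mu A a * (mu B (g a))⁻¹ ∧ Nat.card (Over g (g a) a) ≠ 0 := by
  rw [card_over]
  obtain ⟨fA, NA, hNA⟩ := hA a
  obtain ⟨fB, NB, hNB⟩ := hB (g a)
  refine arith _ _ _ (fun n => kk n g a) (fun n => ii n g a) (fun n => cc n g a)
    (fun n => card_A n g a) (fun n => card_B n g a) (fun n => card_F n g a)
    (fun n => ?_) (fun n => ?_) (max NA NB) (fun n hn => ?_) (fun n hn => ?_)
  · have := fA (n + 1) (by omega); exact Nat.card_pos.ne'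
  · have := fB (n + 1) (by omega); exact Nat.card_pos.ne'
  · have := hNA (n + 1) (by have := le_max_left NA NB; omega); exact Nat.card_unique
  · have := hNB (n + 1) (by have := le_max_right NA NB; omega); exact Nat.card_unique

end HF

open scoped unitInterval
set_option autoImplicit false

namespace HF
open scoped unitInterval Topology Topology.Homotopy

section PP
variable {X Y : Type*} [TopologicalSpace X] [TopologicalSpace Y]

/-- The mapping path space. -/
abbrev PS (f : C(X, Y)) : Type _ := {p : X × C(I, Y) // p.2 0 = f p.1}

lemma continuous_PS_mk {Z : Type*} [TopologicalSpace Z] (f : C(X, Y))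
    (F : Z → PS f) (h1 : Continuous fun z => (F z).1.1)
    (h2 : Continuous fun p : Z × I => (F p.1).1.2 p.2) : Continuous F := by
  refine continuous_induced_rng.2 (Continuous.prodMk h1 ?_)
  exact ContinuousMap.continuous_of_continuous_uncurry _ h2

/-- End point evaluation. -/
def ev (f : C(X, Y)) : C(PS f, Y) := ⟨fun p => p.1.2 1, by fun_prop⟩

/-- Projection. -/
def pr (f : C(X, Y)) : C(PS f, X) := ⟨fun p => p.1.1, by fun_prop⟩

/-- Constant paths. -/
def cst (f : C(X, Y)) : C(X, PS f) := ⟨fun x => ⟨(x, ContinuousMap.const I (f x)), rfl⟩, by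
  refine continuous_PS_mk f _ continuous_id ?_
  change Continuous (fun p : X × I => f p.1)
  fun_prop⟩

/-- Contraction of the paths. -/
noncomputable def shrink (f : C(X, Y)) :
    (ContinuousMap.id (PS f)).Homotopy ((cst f).comp (pr f)) where
  toFun p := ⟨(p.2.1.1, ⟨fun t => p.2.1.2 (cl ((1 - (p.1 : ℝ)) * t)),
    by have := continuous_cl; fun_prop⟩), by
      change p.2.1.2 (cl ((1 - (p.1 : ℝ)) * (0 : I))) = _
      rw [Set.Icc.coe_zero, mul_zero, cl_zero]; exact p.2.2⟩
  continuous_toFun := by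
    refine continuous_PS_mk f _ ?_ ?_
    · change Continuous (fun p : I × PS f => p.2.1.1)
      fun_prop
    · change Continuous (fun p : (I × PS f) × I => p.1.2.1.2 (cl ((1 - (p.1.1 : ℝ)) * p.2)))
      have := continuous_cl
      fun_prop
  map_zero_left p := by
    apply Subtype.ext
    refine Prod.ext rfl ?_
    ext t
    change p.1.2 (cl ((1 - ((0 : I) : ℝ)) * t)) = p.1.2 t
    rw [Set.Icc.coe_zero, sub_zero, one_mul, cl_coe]
  map_one_left p := by
    apply Subtype.ext
    refine Prod.ext rfl ?_
    ext t
    change p.1.2 (cl ((1 - ((1 : I) : ℝ)) * t)) = f p.1.1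
    rw [Set.Icc.coe_one, sub_self, zero_mul, cl_zero]
    exact p.2

lemma card_PS (f : C(X, Y)) (n : ℕ) (z : PS f) : Nat.card (HomotopyGroup (Fin n) (PS f) z) =
    Nat.card (HomotopyGroup (Fin n) X z.1.1) :=
  card_hequiv (pr f) (cst f) (shrink f) ((ContinuousMap.Homotopy.refl _).cast rfl rfl) n z

lemma joined_PS (f : C(X, Y)) (z z' : PS f) : Joined z z' ↔ Joined z.1.1 z'.1.1 := by
  constructor
  · rintro ⟨P⟩
    exact ⟨P.map (pr f).continuous⟩
  · rintro ⟨P⟩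
    have h : ∀ w : PS f, Joined w (cst f (pr f w)) := fun w => ⟨(shrink f).evalAt w⟩
    exact (h z).trans (Joined.trans ⟨P.map (cst f).continuous⟩ (h z').symm)

lemma locFin_PS (f : C(X, Y)) (hX : IsLocallyFinite X) : IsLocallyFinite (PS f) := by
  intro z
  obtain ⟨h1, N, h2⟩ := hX z.1.1
  refine ⟨fun n hn => ?_, N, fun n hn => ?_⟩
  · have := h1 n hn
    apply Nat.finite_of_card_ne_zero
    rw [card_PS]
    exact Nat.card_pos.ne'
  · have := h2 n hn
    have h3 : Nat.card (HomotopyGroup (Fin n) (PS f) z) = 1 := by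
      rw [card_PS]; exact Nat.card_unique
    exact (Nat.card_eq_one_iff_unique.1 h3).1

lemma mu_congr {x : X} {y : Y} (h : ∀ n, Nat.card (HomotopyGroup (Fin n) X x) =
    Nat.card (HomotopyGroup (Fin n) Y y)) : mu X x = mu Y y := by
  unfold mu
  simp only [h]

/-- Concatenation. -/
noncomputable def LL (f : C(X, Y)) {y : Y} (w : HomotopyFiber (ev f) y) (s t : I) : Y :=
  if (1 + (s : ℝ)) * t ≤ 1 then w.1.1.1.2 (cl ((1 + (s : ℝ)) * t))
  else w.1.2 (cl ((1 + (s : ℝ)) * t - 1))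

lemma LL_cont (f : C(X, Y)) (y : Y) : Continuous (fun p : HomotopyFiber (ev f) y × I × I =>
    LL f p.1 p.2.1 p.2.2) := by
  have := continuous_cl
  unfold LL
  refine Continuous.if_le (by fun_prop) (by fun_prop) (by fun_prop) continuous_const ?_
  intro p hp
  rw [hp, sub_self, cl_one, cl_zero]
  exact p.1.2.1.symm

lemma LL_cont_t (f : C(X, Y)) {y : Y} (w : HomotopyFiber (ev f) y) (s : I) :
    Continuous (LL f w s) :=
  (LL_cont f y).comp (Continuous.prodMk continuous_const
    (Continuous.prodMk continuous_const continuous_id))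

lemma LL_s0 (f : C(X, Y)) {y : Y} (w : HomotopyFiber (ev f) y) (t : I) :
    LL f w 0 t = w.1.1.1.2 t := by
  unfold LL
  rw [Set.Icc.coe_zero, add_zero, one_mul, if_pos t.2.2, cl_coe]

lemma LL_t0 (f : C(X, Y)) {y : Y} (w : HomotopyFiber (ev f) y) (s : I) :
    LL f w s 0 = f w.1.1.1.1 := by
  unfold LL
  rw [Set.Icc.coe_zero, mul_zero, if_pos zero_le_one, cl_zero]
  exact w.1.1.2

lemma LL_t1 (f : C(X, Y)) {y : Y} (w : HomotopyFiber (ev f) y) (s : I) :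
    LL f w s 1 = w.1.2 s := by
  unfold LL
  rw [Set.Icc.coe_one, mul_one]
  split_ifs with h
  · have hs : s = 0 := Subtype.ext (le_antisymm (by simpa using h) s.2.1)
    subst hs
    rw [Set.Icc.coe_zero, add_zero, cl_one]
    exact w.2.1.symm
  · rw [add_sub_cancel_left, cl_coe]

/-- From the fiber of `f` to the strict points of the fiber of `ev f`. -/
def ph (f : C(X, Y)) (y : Y) : C(HomotopyFiber f y, HomotopyFiber (ev f) y) :=
  ⟨fun z => ⟨(⟨z.1, z.2.1⟩, ContinuousMap.const I y), z.2.2.symm, rfl⟩, by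
    refine continuous_fiber_mk (ev f) _ ?_ ?_
    · exact Continuous.subtype_mk continuous_subtype_val _
    · exact continuous_const⟩

/-- Back. -/
noncomputable def ps (f : C(X, Y)) (y : Y) : C(HomotopyFiber (ev f) y, HomotopyFiber f y) :=
  ⟨fun w => ⟨(w.1.1.1.1, ⟨LL f w 1, LL_cont_t f w 1⟩), LL_t0 f w 1,
      (LL_t1 f w 1).trans w.2.2⟩, by
    refine continuous_fiber_mk f _ ?_ ?_
    · change Continuous (fun w : HomotopyFiber (ev f) y => w.1.1.1.1)
      fun_prop
    · exact (LL_cont f y).comp (Continuous.prodMk continuous_fst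
        (Continuous.prodMk continuous_const continuous_snd))⟩

/-- First homotopy. -/
noncomputable def hom1 (f : C(X, Y)) (y : Y) :
    (ContinuousMap.id (HomotopyFiber f y)).Homotopy ((ps f y).comp (ph f y)) where
  toFun p := ⟨(p.2.1.1, ⟨LL f (ph f y p.2) p.1, LL_cont_t f _ _⟩), LL_t0 f (ph f y p.2) p.1,
      LL_t1 f (ph f y p.2) p.1⟩
  continuous_toFun := by
    refine continuous_fiber_mk f _ ?_ ?_
    · change Continuous (fun w : I × HomotopyFiber f y => w.2.1.1)
      fun_prop
    · change Continuous (fun w : (I × HomotopyFiber f y) × I => LL f (ph f y w.1.2) w.1.1 w.2)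
      exact (LL_cont f y).comp (Continuous.prodMk (by fun_prop)
        (Continuous.prodMk (by fun_prop) continuous_snd))
  map_zero_left z := by
    apply Subtype.ext
    refine Prod.ext rfl ?_
    ext t
    exact LL_s0 f (ph f y z) t
  map_one_left z := rfl

/-- Second homotopy. -/
noncomputable def hom2 (f : C(X, Y)) (y : Y) :
    (ContinuousMap.id (HomotopyFiber (ev f) y)).Homotopy ((ph f y).comp (ps f y)) where
  toFun p := ⟨(⟨(p.2.1.1.1.1, ⟨LL f p.2 p.1, LL_cont_t f _ _⟩), LL_t0 f p.2 p.1⟩,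
      ⟨fun t => p.2.1.2 (cl ((p.1 : ℝ) + t)), by have := continuous_cl; fun_prop⟩), by
        change p.2.1.2 (cl ((p.1 : ℝ) + (0 : I))) = LL f p.2 p.1 1
        rw [LL_t1, Set.Icc.coe_zero, add_zero, cl_coe], by
        change p.2.1.2 (cl ((p.1 : ℝ) + (1 : I))) = y
        rw [cl_of_one_le (by rw [Set.Icc.coe_one]; linarith [p.1.2.1])]
        exact p.2.2.2⟩
  continuous_toFun := by
    refine continuous_fiber_mk (ev f) _ ?_ ?_
    · refine continuous_PS_mk f _ ?_ ?_
      · change Continuous (fun w : I × HomotopyFiber (ev f) y => w.2.1.1.1.1)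
        fun_prop
      · change Continuous (fun w : (I × HomotopyFiber (ev f) y) × I => LL f w.1.2 w.1.1 w.2)
        exact (LL_cont f y).comp (Continuous.prodMk (by fun_prop)
          (Continuous.prodMk (by fun_prop) continuous_snd))
    · change Continuous (fun w : (I × HomotopyFiber (ev f) y) × I =>
        w.1.2.1.2 (cl ((w.1.1 : ℝ) + w.2)))
      have := continuous_cl
      fun_prop
  map_zero_left w := by
    apply Subtype.ext
    refine Prod.ext (Subtype.ext (Prod.ext rfl ?_)) ?_
    · ext t; exact LL_s0 f w t
    · ext t
      change w.1.2 (cl (((0 : I) : ℝ) + t)) = w.1.2 t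
      rw [Set.Icc.coe_zero, zero_add, cl_coe]
  map_one_left w := by
    apply Subtype.ext
    refine Prod.ext rfl ?_
    ext t
    change w.1.2 (cl (((1 : I) : ℝ) + t)) = y
    rw [cl_of_one_le (by rw [Set.Icc.coe_one]; linarith [t.2.1])]
    exact w.2.2

lemma card_over_PS (f : C(X, Y)) (y : Y) (z : HomotopyFiber f y) :
    Nat.card (Over f y z.1.1) = Nat.card (Over (ev f) y ⟨z.1, z.2.1⟩) := by
  let S := {w : HomotopyFiber f y // Joined w.1.1 z.1.1}
  let u : S → Over f y z.1.1 := fun w => ⟨toPi0 w.1, by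
    rw [pi0Map_toPi0, toPi0_eq]; exact w.2⟩
  let v : S → Over (ev f) y ⟨z.1, z.2.1⟩ := fun w => ⟨toPi0 (ph f y w.1), by
    rw [pi0Map_toPi0, toPi0_eq, joined_PS]; exact w.2⟩
  refine card_of_surj u v ?_ ?_ ?_
  · rintro ⟨d, hd⟩
    obtain ⟨w, rfl⟩ := toPi0_surj d
    have hd' := hd
    rw [pi0Map_toPi0, toPi0_eq] at hd'
    exact ⟨⟨w, hd'⟩, rfl⟩
  · rintro ⟨d, hd⟩
    obtain ⟨w, rfl⟩ := toPi0_surj d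
    have hd' := hd
    rw [pi0Map_toPi0, toPi0_eq, joined_PS] at hd'
    refine ⟨⟨ps f y w, hd'⟩, ?_⟩
    apply Subtype.ext
    change toPi0 _ = toPi0 _
    rw [toPi0_eq]
    exact Joined.symm ⟨(hom2 f y).evalAt w⟩
  · intro p q
    rw [Subtype.ext_iff, Subtype.ext_iff]
    change toPi0 _ = toPi0 _ ↔ toPi0 _ = toPi0 _
    rw [toPi0_eq, toPi0_eq]
    constructor
    · rintro ⟨P⟩
      exact ⟨P.map (ph f y).continuous⟩
    · rintro ⟨P⟩
      have h : ∀ w : HomotopyFiber f y, Joined w (ps f y (ph f y w)) :=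
        fun w => ⟨(hom1 f y).evalAt w⟩
      exact (h _).trans (Joined.trans ⟨P.map (ps f y).continuous⟩ (h _).symm)

lemma mu_point (hX : IsLocallyFinite X) (hY : IsLocallyFinite Y) (f : C(X, Y)) (y : Y)
    (z : HomotopyFiber f y) :
    mu (HomotopyFiber f y) z * Nat.card (Over f y z.1.1) = mu X z.1.1 * (mu Y y)⁻¹ ∧
      Nat.card (Over f y z.1.1) ≠ 0 := by
  rw [card_over_PS f y z]
  have h1 : mu (HomotopyFiber f y) z = mu (HomotopyFiber (ev f) y) (ph f y z) :=
    mu_congr fun n => card_hequiv (ph f y) (ps f y) (hom1 f y) (hom2 f y) n z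
  have h2 : mu X z.1.1 = mu (PS f) ⟨z.1, z.2.1⟩ :=
    mu_congr fun n => (card_PS f n ⟨z.1, z.2.1⟩).symm
  rw [h1, h2]
  obtain ⟨⟨x, q⟩, hz0, hz1⟩ := z
  dsimp only at hz0 hz1
  subst hz1
  exact mu_fiber (locFin_PS f hX) hY (ev f) ⟨(x, q), hz0⟩

lemma mu_joined {x x' : X} (h : Joined x x') : mu X x = mu X x' :=
  mu_congr fun n => card_joined n h

lemma final (hX : IsLocallyFinite X) (hY : IsLocallyFinite Y) (f : C(X, Y))
    (α : ZerothHomotopy X → ℚ) (hα : (Function.support α).Finite) (y : Y)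
    (rep : ZerothHomotopy (HomotopyFiber f y) → HomotopyFiber f y)
    (hrep : ∀ z, toPi0 (rep z) = z)
    (repX : ZerothHomotopy X → X) (hrepX : ∀ c, toPi0 (repX c) = c) :
    (Function.support fun z : ZerothHomotopy (HomotopyFiber f y) =>
        α (toPi0 (fiberIncl f y (rep z))) * mu (HomotopyFiber f y) (rep z)).Finite ∧
    ∑ᶠ z : ZerothHomotopy (HomotopyFiber f y),
        α (toPi0 (fiberIncl f y (rep z))) * mu (HomotopyFiber f y) (rep z) =
      ∑ᶠ c ∈ {c : ZerothHomotopy X | pi0Map f.continuous c = toPi0 y},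
        α c * mu X (repX c) * (mu Y y)⁻¹ := by
  classical
  let is : ZerothHomotopy (HomotopyFiber f y) → ZerothHomotopy X :=
    pi0Map (continuous_fiberIncl f y)
  let N : ZerothHomotopy X → ℕ := fun c => Nat.card {w // is w = c}
  let t : ZerothHomotopy X → ℚ := fun c => α c * (mu X (repX c) * (mu Y y)⁻¹ / N c)
  have hN : ∀ w, N (is w) ≠ 0 := by
    intro w
    obtain ⟨z, rfl⟩ := toPi0_surj w
    exact (mu_point hX hY f y z).2
  have hfin : ∀ c, (is ⁻¹' {c}).Finite := by
    intro c
    rcases (is ⁻¹' {c}).eq_empty_or_nonempty with h | ⟨w, hw⟩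
    · rw [h]; exact Set.finite_empty
    · have hw' : is w = c := hw
      subst hw'
      have : Finite (is ⁻¹' {is w} : Set _) := Nat.finite_of_card_ne_zero (hN w)
      exact Set.toFinite _
  have hT : ∀ z, α (toPi0 (fiberIncl f y (rep z))) * mu (HomotopyFiber f y) (rep z) = t (is z) := by
    intro z
    have e1 : toPi0 (fiberIncl f y (rep z)) = is z := by
      conv_rhs => rw [← hrep z]
      rfl
    have h := mu_point hX hY f y (rep z)
    have e2 : Nat.card (Over f y (rep z).1.1) = N (is z) := by rw [← e1]; rfl
    have e3 : mu X (rep z).1.1 = mu X (repX (is z)) := by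
      apply mu_joined
      rw [← toPi0_eq, hrepX, ← e1]; rfl
    rw [e2, e3] at h
    have h0 : (N (is z) : ℚ) ≠ 0 := by exact_mod_cast h.2
    rw [e1]
    change _ = α (is z) * (mu X (repX (is z)) * (mu Y y)⁻¹ / N (is z))
    rw [← h.1, mul_div_cancel_right₀ _ h0]
  simp only [hT]
  have hS : (is ⁻¹' (Function.support α)).Finite := hα.preimage' fun c _ => hfin c
  have hsub : (Function.support fun z => t (is z)) ⊆ is ⁻¹' (Function.support α) := by
    intro z hz h0
    apply hz
    change α (is z) * _ = 0
    rw [h0, zero_mul]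
  refine ⟨hS.subset hsub, ?_⟩
  rw [finsum_eq_sum_of_support_subset (s := hS.toFinset) _ (by rw [Set.Finite.coe_toFinset]; exact hsub)]
  rw [finsum_mem_def, finsum_eq_sum_of_support_subset (s := hα.toFinset) _ ?_]
  · rw [← Finset.sum_fiberwise_of_maps_to (s := hS.toFinset) (t := hα.toFinset) (g := is)
      (fun z hz => by rw [Set.Finite.mem_toFinset] at hz ⊢; exact hz)]
    refine Finset.sum_congr rfl fun c hc => ?_
    have hc' : α c ≠ 0 := by rw [Set.Finite.mem_toFinset] at hc; exact hc
    have hcard : (hS.toFinset.filter fun z => is z = c).card = N c := by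
      refine (Nat.subtype_card _ fun z => ?_).symm
      rw [Finset.mem_filter, Set.Finite.mem_toFinset]
      constructor
      · exact fun h => h.2
      · intro h
        refine ⟨?_, h⟩
        change α (is z) ≠ 0
        rw [h]; exact hc'
    rw [Finset.sum_congr rfl (g := fun _ => t c) (fun z hz => by
      rw [(Finset.mem_filter.1 hz).2]), Finset.sum_const, hcard, nsmul_eq_mul]
    by_cases hne : ∃ w, is w = c
    · obtain ⟨w, rfl⟩ := hne
      have h0 : (N (is w) : ℚ) ≠ 0 := by exact_mod_cast hN w
      rw [Set.indicator_of_mem]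
      · change _ * (α (is w) * (mu X (repX (is w)) * (mu Y y)⁻¹ / N (is w))) = _
        field_simp
      · change pi0Map f.continuous (is w) = toPi0 y
        obtain ⟨z, rfl⟩ := toPi0_surj w
        change toPi0 (f z.1.1) = toPi0 y
        rw [toPi0_eq]
        exact ⟨fpath f z⟩
    · have h0 : N c = 0 := by
        have : IsEmpty {w // is w = c} := ⟨fun w => hne ⟨w.1, w.2⟩⟩
        exact Nat.card_of_isEmpty
      rw [Set.indicator_of_notMem, h0]
      · simp
      · intro hmem
        apply hne
        obtain ⟨x, rfl⟩ := toPi0_surj c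
        have : toPi0 (f x) = toPi0 y := hmem
        rw [toPi0_eq] at this
        obtain ⟨q⟩ := this
        exact ⟨toPi0 (fpt f x q), rfl⟩
  · intro c hc
    rw [Set.Finite.coe_toFinset]
    intro h0
    apply hc
    rw [Set.indicator_apply]
    split_ifs
    · rw [h0]; ring
    · rfl

end PP
end HF

theorem statement0 {X Y : Type*} [TopologicalSpace X] [TopologicalSpace Y]
    (hX : IsLocallyFinite X) (hY : IsLocallyFinite Y)
    {f : X → Y} (hf : Continuous f)
    (α : ZerothHomotopy X → ℚ) (hα : (Function.support α).Finite) (y : Y)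
    -- an arbitrary choice of representative points for the components of the homotopy fiber
    (rep : ZerothHomotopy (HomotopyFiber f y) → HomotopyFiber f y)
    (hrep : ∀ z, toPi0 (rep z) = z)
    -- an arbitrary choice of representative points for the components of `X`
    (repX : ZerothHomotopy X → X) (hrepX : ∀ c, toPi0 (repX c) = c) :
    (Function.support fun z : ZerothHomotopy (HomotopyFiber f y) =>
        α (toPi0 (fiberIncl f y (rep z))) * mu (HomotopyFiber f y) (rep z)).Finite ∧
    ∑ᶠ z : ZerothHomotopy (HomotopyFiber f y),
        α (toPi0 (fiberIncl f y (rep z))) * mu (HomotopyFiber f y) (rep z) =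
      ∑ᶠ c ∈ {c : ZerothHomotopy X | pi0Map hf c = toPi0 y},
        α c * mu X (repX c) * (mu Y y)⁻¹ := by
  exact HF.final hX hY ⟨f, hf⟩ α hα y rep hrep repX hrepX
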